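/- Let (p_n) be a sequence in [0,1] with limsup_{n→∞} n·p_n < ∞. Then for every ε > 0, with high probability the Erdős–Rényi random graph G ~ 𝔾(n, p_n) has an ε-almost-internal bisection and an ε-almost-external bisection. -/

import Mathlib

open MeasureTheory Filter

/-- Bernoulli measure on `Bool` with parameter `p`. -/
noncomputable def bernoulliM (p : ℝ) : Measure Bool :=
  (Real.toNNReal p) • Measure.dirac true + (Real.toNNReal (1 - p)) • Measure.dirac false

instance (p : ℝ) : IsFiniteMeasure (bernoulliM p) := by
  unfold bernoulliM; infer_instance

/-- The Erdős–Rényi measure `𝔾(n,p)`: a random symmetric adjacency structure is encoded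
by a matrix of independent Bernoulli(p) entries, of which only the entries strictly
above the diagonal are used (via `GrAdj`). -/
noncomputable def erMeasure (n : ℕ) (p : ℝ) : Measure (Fin n → Fin n → Bool) :=
  Measure.pi fun _ => Measure.pi fun _ => bernoulliM p

/-- Adjacency in the graph encoded by the matrix `A`: distinct vertices `u, v` are
adjacent iff the entry of `A` at the ordered pair `(min u v, max u v)` is `true`. -/
def GrAdj {n : ℕ} (A : Fin n → Fin n → Bool) (u v : Fin n) : Prop :=
  u ≠ v ∧ A (min u v) (max u v) = true

/-- A red-blue colouring of `Fin n` is a *bisection* if its two colour classes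
differ in size by at most 1. -/
def IsBisection {n : ℕ} (c : Fin n → Bool) : Prop :=
  |(({v | c v = true} : Set (Fin n)).ncard : ℤ) -
    (({v | c v = false} : Set (Fin n)).ncard : ℤ)| ≤ 1

/-- Vertex `v` has at least half of its neighbours in its own colour class. -/
def InternalAt {n : ℕ} (A : Fin n → Fin n → Bool) (c : Fin n → Bool) (v : Fin n) : Prop :=
  ({w | GrAdj A v w} : Set (Fin n)).ncard ≤
    2 * ({w | GrAdj A v w ∧ c w = c v} : Set (Fin n)).ncard

/-- Vertex `v` has at least half of its neighbours in the opposite colour class. -/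
def ExternalAt {n : ℕ} (A : Fin n → Fin n → Bool) (c : Fin n → Bool) (v : Fin n) : Prop :=
  ({w | GrAdj A v w} : Set (Fin n)).ncard ≤
    2 * ({w | GrAdj A v w ∧ c w ≠ c v} : Set (Fin n)).ncard

/-- All but at most `ε * n` vertices are internal. -/
def AlmostInternal {n : ℕ} (A : Fin n → Fin n → Bool) (c : Fin n → Bool) (ε : ℝ) : Prop :=
  ((({v | ¬ InternalAt A c v} : Set (Fin n)).ncard : ℝ)) ≤ ε * n

/-- All but at most `ε * n` vertices are external. -/
def AlmostExternal {n : ℕ} (A : Fin n → Fin n → Bool) (c : Fin n → Bool) (ε : ℝ) : Prop :=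
  ((({v | ¬ ExternalAt A c v} : Set (Fin n)).ncard : ℝ)) ≤ ε * n

section helpers
open Finset
open scoped Classical

/-- sign of a colour -/
def sg (b : Bool) : ℤ := if b then 1 else -1

theorem sg_not (b : Bool) : sg (!b) = - sg b := by cases b <;> simp [sg]
theorem sg_sq (b : Bool) : sg b * sg b = 1 := by cases b <;> simp [sg]
theorem sg_mul_le (a b : Bool) : sg a * sg b ≤ 1 := by cases a <;> cases b <;> simp [sg]

set_option linter.unusedSectionVars false

variable {V : Type} [Fintype V]

/-- term of the local field -/
noncomputable def tt (s : ℤ) (adj : V → V → Prop) (c : V → Bool) (v w : V) : ℤ :=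
  s * if adj v w then sg (c v) * sg (c w) else 0

/-- local field -/
noncomputable def loc (s : ℤ) (adj : V → V → Prop) (c : V → Bool) (v : V) : ℤ :=
  ∑ w, tt s adj c v w

/-- total energy -/
noncomputable def en (s : ℤ) (adj : V → V → Prop) (c : V → Bool) : ℤ := ∑ v, loc s adj c v

/-- flipping the unhappy vertices in A -/
noncomputable def stp (s : ℤ) (adj : V → V → Prop) (A : Finset V) (c : V → Bool) (v : V) : Bool :=
  if v ∈ A ∧ loc s adj c v < 0 then !c v else c v

theorem tt_not (s : ℤ) (adj : V → V → Prop) (c : V → Bool) (v w : V) :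
    tt s adj (fun u => !c u) v w = tt s adj c v w := by
  simp [tt, sg_not]

theorem loc_not (s : ℤ) (adj : V → V → Prop) (c : V → Bool) (v : V) :
    loc s adj (fun u => !c u) v = loc s adj c v := by
  simp [loc, tt_not]

theorem stp_not (s : ℤ) (adj : V → V → Prop) (A : Finset V) (c : V → Bool) (v : V) :
    stp s adj A (fun u => !c u) v = ! stp s adj A c v := by
  simp only [stp, loc_not]
  split_ifs <;> rfl

theorem tt_congr (s : ℤ) (adj : V → V → Prop) (c d : V → Bool) (v w : V) (hv : c v = d v)
    (h : adj v w → c w = d w) : tt s adj c v w = tt s adj d v w := by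
  unfold tt
  split_ifs with h1
  · rw [hv, h h1]
  · rfl

theorem loc_congr (s : ℤ) (adj : V → V → Prop) (c d : V → Bool) (v : V) (hv : c v = d v)
    (h : ∀ w, adj v w → c w = d w) : loc s adj c v = loc s adj d v :=
  Finset.sum_congr rfl fun w _ => tt_congr s adj c d v w hv (h w)

theorem en_stp (s : ℤ) (adj : V → V → Prop) (hsym : ∀ u v, adj u v → adj v u)
    (A : Finset V) (hA : ∀ u ∈ A, ∀ v ∈ A, ¬ adj u v) (c : V → Bool) :
    en s adj c + 4 * #{v ∈ A | loc s adj c v < 0} ≤ en s adj (stp s adj A c) := by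
  set b : V → ℤ := fun v => if v ∈ A ∧ loc s adj c v < 0 then 1 else 0 with hb
  have h1 : ∀ v, sg (stp s adj A c v) = sg (c v) * (1 - 2 * b v) := by
    intro v
    simp only [stp, hb]
    split_ifs
    · rw [sg_not]; ring
    · ring
  have hts : ∀ u v, tt s adj c u v = tt s adj c v u := by
    intro u v
    have : adj u v ↔ adj v u := ⟨hsym _ _, hsym _ _⟩
    simp only [tt, this, mul_comm (sg (c u))]
  have h2 : ∀ u v, tt s adj (stp s adj A c) u v
      = tt s adj c u v - 2 * (b u * tt s adj c u v) - 2 * (b v * tt s adj c v u) := by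
    intro u v
    rw [hts v u]
    simp only [tt, h1]
    split_ifs with h
    · have hbb : b u * b v = 0 := by
        simp only [hb]
        by_cases hu : u ∈ A
        · by_cases hv : v ∈ A
          · exact absurd h (hA u hu v hv)
          · simp [hv]
        · simp [hu]
      linear_combination (4 * s * sg (c u) * sg (c v)) * hbb
    · ring
  have h3 : en s adj (stp s adj A c) = en s adj c - 4 * ∑ v, b v * loc s adj c v := by
    have e1 : ∑ u, ∑ v, b u * tt s adj c u v = ∑ v, b v * loc s adj c v := by
      simp only [loc, mul_sum]
    have e2 : ∑ u, ∑ v, b v * tt s adj c v u = ∑ v, b v * loc s adj c v := by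
      rw [sum_comm]; simp only [loc, mul_sum]
    unfold en
    conv_lhs => unfold loc
    have e3 : ∀ f : V → V → ℤ, ∑ u, ∑ v, 2 * f u v = 2 * ∑ u, ∑ v, f u v := by
      intro f; simp only [mul_sum]
    simp only [h2, sum_sub_distrib]
    rw [e3, e3, e1, e2]
    unfold loc
    ring
  have h4 : ∑ v, b v * loc s adj c v ≤ ∑ v, - b v := by
    apply sum_le_sum
    intro v _
    simp only [hb]
    split_ifs with h
    · linarith [h.2]
    · simp
  have h5 : ∑ v, b v = #{v ∈ A | loc s adj c v < 0} := by
    simp only [hb]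
    rw [Finset.sum_boole]
    congr 2
    ext v; simp
  rw [sum_neg_distrib, h5] at h4
  rw [h3]; linarith

theorem abs_loc_le (s : ℤ) (hs : s = 1 ∨ s = -1) (adj : V → V → Prop) (Δ : ℕ)
    (hdeg : ∀ v, #{w | adj v w} ≤ Δ) (c : V → Bool) (v : V) : |loc s adj c v| ≤ Δ := by
  have : |loc s adj c v| ≤ ∑ w, if adj v w then (1:ℤ) else 0 := by
    refine (abs_sum_le_sum_abs _ _).trans (sum_le_sum fun w _ => ?_)
    unfold tt
    split_ifs
    · rcases hs with rfl | rfl <;> cases c v <;> cases c w <;> simp [sg]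
    · simp
  rw [Finset.sum_boole] at this
  exact this.trans (by exact_mod_cast hdeg v)

theorem abs_en_le (s : ℤ) (hs : s = 1 ∨ s = -1) (adj : V → V → Prop) (Δ : ℕ)
    (hdeg : ∀ v, #{w | adj v w} ≤ Δ) (c : V → Bool) :
    |en s adj c| ≤ Δ * Fintype.card V := by
  refine (abs_sum_le_sum_abs _ _).trans
    ((sum_le_sum fun w _ => abs_loc_le s hs adj Δ hdeg c w).trans ?_)
  simp [mul_comm]

theorem exists_col (adj : V → V → Prop) (hsym : ∀ u v, adj u v → adj v u)
    (hirr : ∀ v, ¬ adj v v) (Δ : ℕ)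
    (hdeg : ∀ v, #{w | adj v w} ≤ Δ) :
    ∃ col : V → Fin (Δ + 1), ∀ u v, adj u v → col u ≠ col v := by
  have key : ∀ S : Finset V, ∃ col : V → Fin (Δ + 1),
      ∀ u ∈ S, ∀ v ∈ S, adj u v → col u ≠ col v := by
    intro S
    induction S using Finset.induction_on with
    | empty => exact ⟨fun _ => 0, by simp⟩
    | insert a S ha ih =>
      obtain ⟨col, hcol⟩ := ih
      have : ∃ k : Fin (Δ + 1), k ∉ (univ.filter (fun w => adj a w)).image col := by
        by_contra! h
        have h1 : (univ : Finset (Fin (Δ + 1))) ⊆ (univ.filter (fun w => adj a w)).image col :=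
          fun k _ => h k
        have h2 := (card_le_card h1).trans (card_image_le.trans (hdeg a))
        simp at h2
      obtain ⟨k, hk⟩ := this
      have hk' : ∀ w, adj a w → col w ≠ k := by
        intro w hw he
        exact hk (by simp only [mem_image, mem_filter, mem_univ, true_and]; exact ⟨w, hw, he⟩)
      refine ⟨Function.update col a k, ?_⟩
      intro u hu v hv huv
      by_cases h1 : u = a
      · subst h1
        have h2 : v ≠ u := fun h => hirr u (h ▸ huv)
        rw [Function.update_self, Function.update_of_ne h2]
        exact (hk' v huv).symm
      · by_cases h2 : v = a
        · subst h2
          rw [Function.update_self, Function.update_of_ne h1]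
          exact hk' u (hsym _ _ huv)
        · rw [Function.update_of_ne h1, Function.update_of_ne h2]
          exact hcol u (mem_of_mem_insert_of_ne hu h1) v (mem_of_mem_insert_of_ne hv h2) huv
  obtain ⟨col, h⟩ := key univ
  exact ⟨col, fun u v => h u (mem_univ _) v (mem_univ _)⟩

/-- An odd map on colourings which is local with parameter B. -/
def OddLocal (F : (V → Bool) → V → Bool) (B : ℕ) : Prop :=
  (∀ x v, F (fun u => !x u) v = !F x v) ∧
  ∃ N : V → Finset V, (∀ v, #(N v) ≤ B) ∧ (∀ w, #{v | w ∈ N v} ≤ B) ∧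
    ∀ x y v, (∀ w ∈ N v, x w = y w) → F x v = F y v

theorem oddLocal_id : OddLocal (fun (x : V → Bool) => x) 1 := by
  refine ⟨fun _ _ => rfl, fun v => {v}, by simp, ?_, by simp⟩
  intro w
  simp [Finset.filter_eq]

theorem oddLocal_stp (s : ℤ) (adj : V → V → Prop) (hsym : ∀ u v, adj u v → adj v u) (Δ : ℕ)
    (hdeg : ∀ v, #{w | adj v w} ≤ Δ) (A : Finset V) (F : (V → Bool) → V → Bool) (B : ℕ)
    (hF : OddLocal F B) : OddLocal (fun x => stp s adj A (F x)) ((Δ + 1) * B) := by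
  obtain ⟨hodd, N, hN1, hN2, hN3⟩ := hF
  have hnb : ∀ v, #(insert v (univ.filter fun w => adj v w)) ≤ Δ + 1 := fun v =>
    (card_insert_le _ _).trans (Nat.succ_le_succ (hdeg v))
  refine ⟨?_, fun v => (insert v (univ.filter fun w => adj v w)).biUnion N, ?_, ?_, ?_⟩
  · intro x v
    have : F (fun u => !x u) = fun v => !F x v := funext (hodd x)
    simp only [this, stp_not]
  · intro v
    exact (card_biUnion_le_card_mul _ _ B (fun w _ => hN1 w)).trans
      (Nat.mul_le_mul_right _ (hnb v))
  · intro w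
    have hsub : (univ.filter fun v => w ∈ (insert v (univ.filter fun w => adj v w)).biUnion N)
      ⊆ (univ.filter fun u => w ∈ N u).biUnion
          (fun u => insert u (univ.filter fun w => adj u w)) := by
      intro v hv
      simp only [mem_filter, mem_univ, true_and, mem_biUnion, mem_insert] at hv ⊢
      obtain ⟨a, ha, hw⟩ := hv
      exact ⟨a, hw, ha.imp (fun h => h.symm) (hsym _ _)⟩
    refine (card_le_card hsub).trans
      ((card_biUnion_le_card_mul _ _ (Δ + 1) (fun w _ => hnb w)).trans ?_)
    rw [mul_comm]
    exact Nat.mul_le_mul_left _ (hN2 w)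
  · intro x y v h
    have h0 : F x v = F y v := hN3 _ _ _ fun w hw => h w (by
      simp only [mem_biUnion, mem_insert]; exact ⟨v, Or.inl rfl, hw⟩)
    have h1 : ∀ u, adj v u → F x u = F y u := fun u hu => hN3 _ _ _ fun w hw => h w (by
      simp only [mem_biUnion, mem_insert, mem_filter, mem_univ, true_and]
      exact ⟨u, Or.inr hu, hw⟩)
    simp only [stp, h0, loc_congr s adj (F x) (F y) v h0 h1]

theorem improve (s : ℤ) (adj : V → V → Prop)
    (hsym : ∀ u v, adj u v → adj v u) (hirr : ∀ v, ¬ adj v v) (Δ : ℕ)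
    (hdeg : ∀ v, #{w | adj v w} ≤ Δ) (F : (V → Bool) → V → Bool) (B : ℕ)
    (hF : OddLocal F B) (M : ℝ) (hM : M ≤ ∑ x, (#{v | loc s adj (F x) v < 0} : ℝ)) :
    ∃ F', OddLocal F' ((Δ + 1) * B) ∧
      ((∑ x, en s adj (F x) : ℤ) : ℝ) + 4 * (M / (Δ + 1)) ≤ ((∑ x, en s adj (F' x) : ℤ) : ℝ) := by
  obtain ⟨col, hcol⟩ := exists_col adj hsym hirr Δ hdeg
  have h1 : ∑ x, (#{v | loc s adj (F x) v < 0} : ℝ) =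
      ∑ k, ∑ x, (#{v ∈ univ.filter (fun v => col v = k) | loc s adj (F x) v < 0} : ℝ) := by
    rw [sum_comm]
    refine sum_congr rfl fun x _ => ?_
    rw [card_eq_sum_card_fiberwise (f := col) (t := univ) (fun _ _ => by simp)]
    push_cast
    refine sum_congr rfl fun k _ => ?_
    rw [filter_comm]
  have h2 : ∃ k ∈ (univ : Finset (Fin (Δ + 1))), M / (Δ + 1) ≤
      ∑ x, (#{v ∈ univ.filter (fun v => col v = k) | loc s adj (F x) v < 0} : ℝ) := by
    apply exists_le_of_sum_le univ_nonempty
    rw [← h1]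
    refine le_trans (le_of_eq ?_) hM
    simp only [sum_const, card_univ, Fintype.card_fin, nsmul_eq_mul]
    push_cast
    field_simp
  obtain ⟨k, -, hk⟩ := h2
  refine ⟨_, oddLocal_stp s adj hsym Δ hdeg (univ.filter (fun v => col v = k)) F B hF, ?_⟩
  have h3 : ∀ x, en s adj (F x) +
      4 * #{v ∈ univ.filter (fun v => col v = k) | loc s adj (F x) v < 0}
      ≤ en s adj (stp s adj (univ.filter (fun v => col v = k)) (F x)) := by
    intro x
    apply en_stp s adj hsym
    intro u hu v hv huv
    simp only [mem_filter, mem_univ, true_and] at hu hv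
    exact hcol u v huv (hu.trans hv.symm)
  have h4 := sum_le_sum (s := univ) fun x _ => h3 x
  rw [sum_add_distrib, ← mul_sum] at h4
  have h5 := (Int.cast_le (R := ℝ)).2 h4
  push_cast at h5 ⊢
  linarith

theorem exists_good [Nonempty V] (s : ℤ) (hs : s = 1 ∨ s = -1) (adj : V → V → Prop)
    (hsym : ∀ u v, adj u v → adj v u) (hirr : ∀ v, ¬ adj v v) (Δ : ℕ)
    (hdeg : ∀ v, #{w | adj v w} ≤ Δ) (η : ℝ) (T : ℕ)
    (hT : 2 * Δ < 4 * T * η / (Δ + 1)) :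
    ∃ F, OddLocal F ((Δ + 1) ^ T) ∧ ∑ x : V → Bool, (#{v | loc s adj (F x) v < 0} : ℝ) ≤
      η * Fintype.card V * Fintype.card (V → Bool) := by
  by_contra! hcon
  set n : ℝ := (Fintype.card V : ℝ) with hn
  set X : ℝ := (Fintype.card (V → Bool) : ℝ) with hX
  have hn0 : 0 < n := by simp [hn, Fintype.card_pos]
  have hX0 : 0 < X := by rw [hX]; exact_mod_cast Fintype.card_pos
  have mono : ∀ F : (V → Bool) → V → Bool, ∀ B B', B ≤ B' → OddLocal F B → OddLocal F B' := by
    rintro F B B' h ⟨h1, N, h2, h3, h4⟩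
    exact ⟨h1, N, fun v => (h2 v).trans h, fun v => (h3 v).trans h, h4⟩
  have key : ∀ t ≤ T, ∃ F, OddLocal F ((Δ + 1) ^ t) ∧
      - (Δ * n * X) + 4 * t * (η * n * X / (Δ + 1)) ≤ ((∑ x, en s adj (F x) : ℤ) : ℝ) := by
    intro t
    induction t with
    | zero =>
      intro _
      refine ⟨_, oddLocal_id, ?_⟩
      have : ∑ x : V → Bool, (- (Δ * (Fintype.card V : ℤ))) ≤ ∑ x, en s adj x :=
        sum_le_sum fun x _ => (abs_le.1 (abs_en_le s hs adj Δ hdeg x)).1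
      have := (Int.cast_le (R := ℝ)).2 this
      simp only [sum_const, card_univ, nsmul_eq_mul] at this
      push_cast at this ⊢
      rw [← hn] at this
      simp only [Fintype.card_pi, Fintype.card_bool, prod_const, card_univ] at hX
      push_cast at hX
      rw [hX]
      refine le_trans (le_of_eq ?_) this
      simp
      ring
    | succ t ih =>
      intro ht
      obtain ⟨F, hF, hF2⟩ := ih (by omega)
      have hM := hcon F (mono F _ _ (Nat.pow_le_pow_right (by omega) (by omega)) hF)
      obtain ⟨F', hF', h'⟩ := improve s adj hsym hirr Δ hdeg F _ hF _ hM.le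
      refine ⟨F', by rw [pow_succ']; exact hF', ?_⟩
      push_cast at *
      linarith
  obtain ⟨F, -, hF⟩ := key T le_rfl
  have hup : ((∑ x, en s adj (F x) : ℤ) : ℝ) ≤ Δ * n * X := by
    have : ∑ x : V → Bool, en s adj (F x) ≤ ∑ x : V → Bool, (Δ * (Fintype.card V : ℤ)) :=
      sum_le_sum fun x _ => (abs_le.1 (abs_en_le s hs adj Δ hdeg (F x))).2
    have := (Int.cast_le (R := ℝ)).2 this
    simp only [sum_const, nsmul_eq_mul, Finset.card_univ] at this
    refine this.trans (le_of_eq ?_)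
    rw [Int.cast_mul, Int.cast_natCast, ← hX, Int.cast_mul, Int.cast_natCast, Int.cast_natCast, ← hn]
    ring
  have h1 : (2 * Δ) * (n * X) < 4 * T * η / (Δ + 1) * (n * X) :=
    mul_lt_mul_of_pos_right hT (by positivity)
  have h2 : 4 * T * η / (Δ + 1) * (n * X) = 4 * T * (η * n * X / (Δ + 1)) := by ring
  linarith

/-- imbalance -/
def imb (c : V → Bool) : ℤ := ∑ v, sg (c v)

theorem sum_imb_sq (F : (V → Bool) → V → Bool) (B : ℕ) (hF : OddLocal F B) :
    ∑ x, (imb (F x)) ^ 2 ≤ Fintype.card V * B ^ 2 * Fintype.card (V → Bool) := by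
  obtain ⟨hodd, N, hN1, hN2, hN3⟩ := hF
  have h1 : ∑ x, (imb (F x)) ^ 2 = ∑ u, ∑ v, ∑ x, sg (F x u) * sg (F x v) := by
    simp only [imb, sq, sum_mul_sum]
    rw [sum_comm]
    refine sum_congr rfl fun u _ => ?_
    rw [sum_comm]
  have h2 : ∀ u v, ∑ x, sg (F x u) * sg (F x v) ≤
      if Disjoint (N u) (N v) then 0 else (Fintype.card (V → Bool) : ℤ) := by
    intro u v
    split_ifs with h
    · let φ : (V → Bool) → (V → Bool) := fun x w => if w ∈ N u then !x w else x w
      have hφ : Function.Involutive φ := by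
        intro x; funext w; simp only [φ]; split_ifs <;> simp
      have e := Equiv.sum_comp hφ.toPerm (fun x => sg (F x u) * sg (F x v))
      have e2 : ∀ x, sg (F (φ x) u) * sg (F (φ x) v) = -(sg (F x u) * sg (F x v)) := by
        intro x
        have a1 : F (φ x) u = !F x u := by
          rw [← hodd]
          apply hN3
          intro w hw
          simp [φ, hw]
        have a2 : F (φ x) v = F x v := by
          apply hN3
          intro w hw
          have : w ∉ N u := fun h' => (Finset.disjoint_left.1 h) h' hw
          simp [φ, this]
        rw [a1, a2, sg_not]; ring
      simp only [Function.Involutive.coe_toPerm, e2, sum_neg_distrib] at e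
      linarith
    · refine (sum_le_sum fun x _ => sg_mul_le _ _).trans ?_
      simp
  have h3 : ∀ u, ∑ v, (if Disjoint (N u) (N v) then 0 else (Fintype.card (V → Bool) : ℤ))
      ≤ B ^ 2 * Fintype.card (V → Bool) := by
    intro u
    have hfl : ∑ v, (if Disjoint (N u) (N v) then 0 else (Fintype.card (V → Bool) : ℤ)) =
        ∑ v with ¬ Disjoint (N u) (N v), (Fintype.card (V → Bool) : ℤ) := by
      rw [sum_filter]
      refine sum_congr rfl fun v _ => ?_
      by_cases h : Disjoint (N u) (N v) <;> simp [h]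
    rw [hfl, sum_const, nsmul_eq_mul]
    have hsub : (univ.filter fun v => ¬ Disjoint (N u) (N v)) ⊆
        (N u).biUnion fun w => univ.filter fun v => w ∈ N v := by
      intro v hv
      simp only [mem_filter, mem_univ, true_and, Finset.not_disjoint_iff, mem_biUnion] at hv ⊢
      exact hv
    have hc : #(univ.filter fun v => ¬ Disjoint (N u) (N v)) ≤ B ^ 2 := by
      refine (card_le_card hsub).trans
        ((card_biUnion_le_card_mul _ _ B (fun w _ => hN2 w)).trans ?_)
      rw [sq]; exact Nat.mul_le_mul_right _ (hN1 u)
    have hc' : (#(univ.filter fun v => ¬ Disjoint (N u) (N v)) : ℤ) ≤ (B : ℤ) ^ 2 := by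
      exact_mod_cast hc
    exact mul_le_mul_of_nonneg_right hc' (by positivity)
  rw [h1]
  refine (sum_le_sum fun u _ => (sum_le_sum fun v _ => h2 u v).trans (h3 u)).trans ?_
  simp only [sum_const, nsmul_eq_mul, Finset.card_univ]
  apply le_of_eq; ring

theorem rebalance (c : V → Bool) : ∃ c' : V → Bool, |imb c'| ≤ 1 ∧
    (#{v | c' v ≠ c v} : ℤ) ≤ |imb c| := by
  have key : ∀ k : ℕ, ∀ c : V → Bool, |imb c| ≤ k → ∃ c' : V → Bool, |imb c'| ≤ 1 ∧
    (#{v | c' v ≠ c v} : ℤ) ≤ |imb c| := by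
    intro k
    induction k with
    | zero => intro c hc; exact ⟨c, by push_cast at hc; linarith, by simp⟩
    | succ k ih =>
      intro c hc
      by_cases h1 : |imb c| ≤ 1
      · exact ⟨c, h1, by simp⟩
      have hv : ∃ v, |imb (Function.update c v (!c v))| = |imb c| - 2 := by
        have hupd : ∀ v, imb (Function.update c v (!c v)) = imb c - 2 * sg (c v) := by
          intro v
          unfold imb
          have : ∀ w, sg (Function.update c v (!c v) w) =
              sg (c w) - if w = v then 2 * sg (c v) else 0 := by
            intro w
            by_cases h : w = v
            · subst h; simp [sg_not]; ring
            · simp [h]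
          simp [this]
        by_cases hpos : 0 ≤ imb c
        · rw [abs_of_nonneg hpos] at h1 ⊢
          have : ∃ v ∈ (univ : Finset V), 0 < sg (c v) := by
            apply exists_lt_of_sum_lt (f := fun _ => (0:ℤ))
            have : 0 < imb c := by omega
            simpa [imb] using this
          obtain ⟨v, -, hv⟩ := this
          refine ⟨v, ?_⟩
          have : sg (c v) = 1 := by
            cases h : c v <;> simp [h, sg] at hv ⊢
          rw [hupd, this, abs_of_nonneg (by omega)]; ring
        · push Not at hpos
          rw [abs_of_neg hpos] at h1 ⊢
          have : ∃ v ∈ (univ : Finset V), sg (c v) < 0 := by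
            apply exists_lt_of_sum_lt (g := fun _ => (0:ℤ))
            simpa [imb] using hpos
          obtain ⟨v, -, hv⟩ := this
          refine ⟨v, ?_⟩
          have : sg (c v) = -1 := by
            cases h : c v <;> simp [h, sg] at hv ⊢
          rw [hupd, this, abs_of_nonpos (by omega)]; ring
      obtain ⟨v, hv⟩ := hv
      obtain ⟨c', h2, h3⟩ := ih (Function.update c v (!c v)) (by push_cast at hc; omega)
      refine ⟨c', h2, ?_⟩
      have hsub : (univ.filter fun w => c' w ≠ c w) ⊆
          insert v (univ.filter fun w => c' w ≠ Function.update c v (!c v) w) := by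
        intro w hw
        by_cases h : w = v
        · simp [h]
        · simp only [mem_insert, mem_filter, mem_univ, true_and] at hw ⊢
          right
          rwa [Function.update_of_ne h]
      have := (card_le_card hsub).trans (card_insert_le _ _)
      have : (#(univ.filter fun w => c' w ≠ c w) : ℤ) ≤
        #(univ.filter fun w => c' w ≠ Function.update c v (!c v) w) + 1 := by exact_mod_cast this
      omega
  exact key (imb c).natAbs c (by simp)

theorem bounded_degree (Δ : ℕ) (η : ℝ) (hη : 0 < η) : ∃ n0 : ℕ, ∀ (V : Type) [Fintype V],
    n0 ≤ Fintype.card V → ∀ (s : ℤ) (_ : s = 1 ∨ s = -1) (adj : V → V → Prop)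
    (_ : ∀ u v, adj u v → adj v u) (_ : ∀ v, ¬ adj v v)
    (_ : ∀ v, #{w | adj v w} ≤ Δ), ∃ c : V → Bool, |imb c| ≤ 1 ∧
    (#{v | loc s adj c v < 0} : ℝ) ≤ 3 * η * Fintype.card V := by
  obtain ⟨T, hT⟩ : ∃ T : ℕ, 2 * Δ < 4 * T * η / (Δ + 1) := by
    obtain ⟨T, hT⟩ := exists_nat_gt (2 * (Δ : ℝ) * (Δ + 1) / (4 * η))
    refine ⟨T, ?_⟩
    rw [div_lt_iff₀ (by positivity)] at hT
    rw [lt_div_iff₀ (by positivity)]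
    linarith
  set B := (Δ + 1) ^ T with hB
  have hBpos : 0 < B := by positivity
  obtain ⟨n0, hn0⟩ := exists_nat_ge (2 * (B : ℝ) ^ 2 * (Δ + 1) ^ 2 / η ^ 2)
  refine ⟨n0 + 1, ?_⟩
  intro V _ hV s hs adj hsym hirr hdeg
  have : Nonempty V := Fintype.card_pos_iff.1 (by omega)
  obtain ⟨F, hF, hF2⟩ := exists_good s hs adj hsym hirr Δ hdeg η T hT
  have hF3 := sum_imb_sq F _ hF
  rw [← hB] at hF3
  set n : ℝ := (Fintype.card V : ℝ) with hn
  set X : ℝ := (Fintype.card (V → Bool) : ℝ) with hX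
  have hnn : (n0 : ℝ) ≤ n := by rw [hn]; exact_mod_cast (by omega : n0 ≤ Fintype.card V)
  have hnpos : 0 < n := by simp [hn, Fintype.card_pos]
  have hF4 : ∑ x, ((imb (F x) : ℤ) : ℝ) ^ 2 ≤ n * B ^ 2 * X := by
    have := (Int.cast_le (R := ℝ)).2 hF3
    rw [Int.cast_sum] at this
    simp only [Int.cast_mul, Int.cast_pow, Int.cast_natCast] at this
    exact this
  have hex : ∃ x ∈ (univ : Finset (V → Bool)),
      (#{v | loc s adj (F x) v < 0} : ℝ) + η / B ^ 2 * ((imb (F x) : ℤ) : ℝ) ^ 2 ≤ 2 * η * n := by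
    apply exists_le_of_sum_le univ_nonempty
    rw [sum_add_distrib, ← mul_sum, sum_const, nsmul_eq_mul, Finset.card_univ, ← hX]
    have : η / (B:ℝ) ^ 2 * ∑ x, ((imb (F x) : ℤ) : ℝ) ^ 2 ≤ η / (B:ℝ) ^ 2 * (n * B ^ 2 * X) :=
      mul_le_mul_of_nonneg_left hF4 (by positivity)
    have e : η / (B:ℝ) ^ 2 * (n * B ^ 2 * X) = η * n * X := by field_simp
    linarith
  obtain ⟨x, -, hx⟩ := hex
  have hx1 : (#{v | loc s adj (F x) v < 0} : ℝ) ≤ 2 * η * n := by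
    have : 0 ≤ η / B ^ 2 * ((imb (F x) : ℤ) : ℝ) ^ 2 := by positivity
    linarith
  have hx2 : ((imb (F x) : ℤ) : ℝ) ^ 2 ≤ 2 * n * B ^ 2 := by
    have h0 : (0:ℝ) ≤ (#{v | loc s adj (F x) v < 0} : ℝ) := by positivity
    have h : η / B ^ 2 * ((imb (F x) : ℤ) : ℝ) ^ 2 ≤ 2 * η * n := by linarith
    rw [div_mul_eq_mul_div, div_le_iff₀ (by positivity)] at h
    have : η * ((imb (F x) : ℤ) : ℝ) ^ 2 ≤ η * (2 * n * B ^ 2) := by linarith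
    exact le_of_mul_le_mul_left this hη
  obtain ⟨c, hc1, hc2⟩ := rebalance (F x)
  refine ⟨c, hc1, ?_⟩
  have hsub : (univ.filter fun v => loc s adj c v < 0) ⊆
      (univ.filter fun v => loc s adj (F x) v < 0) ∪
      (univ.filter fun v => c v ≠ F x v).biUnion
        fun v => insert v (univ.filter fun w => adj v w) := by
    intro v hv
    simp only [mem_union, mem_filter, mem_univ, true_and, mem_biUnion, mem_insert] at hv ⊢
    by_contra! hcon
    obtain ⟨h1, h2⟩ := hcon
    have a1 : c v = F x v := by
      by_contra h
      exact (h2 v h).1 rfl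
    have a2 : ∀ w, adj v w → c w = F x w := by
      intro w hw
      by_contra h
      exact (h2 w h).2 (hsym _ _ hw)
    rw [loc_congr s adj c (F x) v a1 a2] at hv
    omega
  have hcard := (card_le_card hsub).trans (card_union_le _ _)
  have hbi := card_biUnion_le_card_mul (univ.filter fun v => c v ≠ F x v)
    (fun v => insert v (univ.filter fun w => adj v w)) (Δ + 1)
    (fun v _ => (card_insert_le _ _).trans (Nat.succ_le_succ (hdeg v)))
  have hcard2 : (#(univ.filter fun v => loc s adj c v < 0) : ℝ) ≤
      #(univ.filter fun v => loc s adj (F x) v < 0) +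
      #(univ.filter fun v => c v ≠ F x v) * (Δ + 1) := by
    exact_mod_cast hcard.trans (Nat.add_le_add_left hbi _)
  have hD : (#(univ.filter fun v => c v ≠ F x v) : ℝ) ≤ |((imb (F x) : ℤ) : ℝ)| := by
    exact_mod_cast hc2
  have hD2 : |((imb (F x) : ℤ) : ℝ)| * (Δ + 1) ≤ η * n := by
    apply abs_le_of_sq_le_sq' _ (by positivity) |>.2
    rw [mul_pow, sq_abs]
    rw [div_le_iff₀ (by positivity)] at hn0
    calc ((imb (F x) : ℤ) : ℝ) ^ 2 * (Δ + 1) ^ 2 ≤ 2 * n * B ^ 2 * (Δ + 1) ^ 2 := by gcongr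
      _ = n * (2 * B ^ 2 * (Δ + 1) ^ 2) := by ring
      _ ≤ n * (n0 * η ^ 2) := by gcongr
      _ ≤ n * (n * η ^ 2) := by gcongr
      _ = (η * n) ^ 2 := by ring
  have : (#(univ.filter fun v => c v ≠ F x v) : ℝ) * (Δ + 1) ≤
      |((imb (F x) : ℤ) : ℝ)| * (Δ + 1) := by gcongr
  linarith

theorem second_moment (K : ℝ) (hK : 0 < K) (ε : ℝ) (hε : 0 < ε) : ∃ n0 : ℕ,
    ∀ (V : Type) [Fintype V],
    n0 ≤ Fintype.card V → ∀ (s : ℤ) (_ : s = 1 ∨ s = -1) (adj : V → V → Prop)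
    (_ : ∀ u v, adj u v → adj v u) (_ : ∀ v, ¬ adj v v)
    (_ : (∑ v, (#{w | adj v w} : ℝ) ^ 2) ≤ K * Fintype.card V), ∃ c : V → Bool, |imb c| ≤ 1 ∧
    (#{v | loc s adj c v < 0} : ℝ) ≤ ε * Fintype.card V := by
  obtain ⟨Δ, hΔ⟩ := exists_nat_gt (4 * K / ε)
  have hΔ0 : (0:ℝ) < Δ := lt_trans (by positivity) hΔ
  obtain ⟨n0, hn0⟩ := bounded_degree Δ (ε / 6) (by positivity)
  refine ⟨n0, ?_⟩
  intro V _ hV s hs adj hsym hirr hsum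
  set deg : V → ℕ := fun v => #{w | adj v w} with hdeg
  obtain ⟨adj', hadj⟩ : ∃ a : V → V → Prop, ∀ u v, a u v ↔ (adj u v ∧ deg u ≤ Δ ∧ deg v ≤ Δ) :=
    ⟨_, fun _ _ => Iff.rfl⟩
  obtain ⟨c, hc1, hc2⟩ := hn0 V hV s hs adj' (fun u v h => by
      rw [hadj] at h ⊢; exact ⟨hsym _ _ h.1, h.2.2, h.2.1⟩)
    (fun v h => hirr v ((hadj _ _).1 h).1) (by
      intro v
      by_cases h : deg v ≤ Δ
      · refine le_trans (card_le_card ?_) h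
        intro w hw
        simp only [mem_filter, mem_univ, true_and] at hw ⊢
        exact ((hadj _ _).1 hw).1
      · have : (univ.filter fun w => adj' v w) = ∅ := by
          apply filter_eq_empty_iff.2
          intro w _ hw
          exact h ((hadj _ _).1 hw).2.1
        rw [this]; simp)
  refine ⟨c, hc1, ?_⟩
  have hsub : (univ.filter fun v => loc s adj c v < 0) ⊆
      (univ.filter fun v => loc s adj' c v < 0) ∪
      (univ.filter fun v => ¬ deg v ≤ Δ).biUnion
        fun v => insert v (univ.filter fun w => adj v w) := by
    intro v hv
    simp only [mem_union, mem_filter, mem_univ, true_and, mem_biUnion, mem_insert] at hv ⊢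
    by_contra! hcon
    obtain ⟨h1, h2⟩ := hcon
    have a1 : deg v ≤ Δ := by
      by_contra h
      exact (h2 v (by omega)).1 rfl
    have a2 : ∀ w, adj v w → deg w ≤ Δ := by
      intro w hw
      by_contra h
      exact (h2 w (by omega)).2 (hsym _ _ hw)
    have : loc s adj c v = loc s adj' c v := by
      refine sum_congr rfl fun w _ => ?_
      have : adj v w ↔ adj' v w := ⟨fun h => (hadj _ _).2 ⟨h, a1, a2 w h⟩, fun h => ((hadj _ _).1 h).1⟩
      simp only [tt, this]
    omega
  have hcard := (card_le_card hsub).trans ((card_union_le _ _).trans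
    (Nat.add_le_add_left card_biUnion_le _))
  have hcard2 : (#(univ.filter fun v => loc s adj c v < 0) : ℝ) ≤
      #(univ.filter fun v => loc s adj' c v < 0) +
      ∑ v with ¬ deg v ≤ Δ, (#(insert v (univ.filter fun w => adj v w)) : ℝ) := by
    exact_mod_cast hcard
  have hb : ∑ v with ¬ deg v ≤ Δ, (#(insert v (univ.filter fun w => adj v w)) : ℝ)
      ≤ ∑ v, 2 / Δ * (deg v : ℝ) ^ 2 := by
    refine (sum_le_sum (g := fun v => 2 / Δ * (deg v : ℝ) ^ 2) ?_).trans
      (sum_le_sum_of_subset_of_nonneg (filter_subset _ _) fun _ _ _ => by positivity)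
    intro v hv
    simp only [mem_filter, mem_univ, true_and, not_le] at hv
    have h1 : #(insert v (univ.filter fun w => adj v w)) ≤ 2 * deg v :=
      (card_insert_le _ _).trans (by change deg v + 1 ≤ _; omega)
    have h2 : (#(insert v (univ.filter fun w => adj v w)) : ℝ) ≤ 2 * deg v := by exact_mod_cast h1
    have h3 : (Δ : ℝ) ≤ deg v := by exact_mod_cast hv.le
    refine h2.trans ?_
    rw [div_mul_eq_mul_div, le_div_iff₀ hΔ0]
    nlinarith
  rw [← mul_sum] at hb
  have hb2 : 2 / Δ * ∑ v, (deg v : ℝ) ^ 2 ≤ 2 / Δ * (K * Fintype.card V) := by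
    gcongr
  have hb3 : 2 / Δ * (K * Fintype.card V) ≤ ε / 2 * Fintype.card V := by
    rw [← mul_assoc]
    gcongr
    rw [div_mul_eq_mul_div, div_le_iff₀ hΔ0]
    rw [div_lt_iff₀ hε] at hΔ
    linarith
  linarith

end helpers

section final
open Finset
open scoped Classical ENNReal

theorem loc_eq_same {V : Type} [Fintype V] (adj : V → V → Prop) (c : V → Bool) (v : V) :
    loc 1 adj c v = 2 * (({w | adj v w ∧ c w = c v} : Set V).ncard : ℤ) -
      (({w | adj v w} : Set V).ncard : ℤ) := by
  rw [Set.ncard_eq_toFinset_card', Set.ncard_eq_toFinset_card', Set.toFinset_ofPred,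
    Set.toFinset_ofPred, ← Finset.sum_boole, ← Finset.sum_boole, mul_sum, ← sum_sub_distrib]
  refine sum_congr rfl fun w _ => ?_
  by_cases h : adj v w <;> cases h1 : c v <;> cases h2 : c w <;> simp [tt, sg, h, h1, h2]

theorem loc_eq_opp {V : Type} [Fintype V] (adj : V → V → Prop) (c : V → Bool) (v : V) :
    loc (-1) adj c v = 2 * (({w | adj v w ∧ c w ≠ c v} : Set V).ncard : ℤ) -
      (({w | adj v w} : Set V).ncard : ℤ) := by
  rw [Set.ncard_eq_toFinset_card', Set.ncard_eq_toFinset_card', Set.toFinset_ofPred,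
    Set.toFinset_ofPred, ← Finset.sum_boole, ← Finset.sum_boole, mul_sum, ← sum_sub_distrib]
  refine sum_congr rfl fun w _ => ?_
  by_cases h : adj v w <;> cases h1 : c v <;> cases h2 : c w <;> simp [tt, sg, h, h1, h2]

theorem internal_iff {n : ℕ} (A : Fin n → Fin n → Bool) (c : Fin n → Bool) (v : Fin n) :
    ¬ InternalAt A c v ↔ loc 1 (GrAdj A) c v < 0 := by
  rw [loc_eq_same, InternalAt]; omega

theorem external_iff {n : ℕ} (A : Fin n → Fin n → Bool) (c : Fin n → Bool) (v : Fin n) :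
    ¬ ExternalAt A c v ↔ loc (-1) (GrAdj A) c v < 0 := by
  rw [loc_eq_opp, ExternalAt]; omega

theorem bisection_of {n : ℕ} (c : Fin n → Bool) (h : |imb c| ≤ 1) : IsBisection c := by
  unfold IsBisection
  refine le_trans (le_of_eq ?_) h
  rw [Set.ncard_eq_toFinset_card', Set.ncard_eq_toFinset_card', Set.toFinset_ofPred,
    Set.toFinset_ofPred, ← Finset.sum_boole, ← Finset.sum_boole, ← sum_sub_distrib, imb]
  congr 1
  refine sum_congr rfl fun w _ => ?_
  cases h1 : c w <;> simp [sg]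

theorem grAdj_symm {n : ℕ} (A : Fin n → Fin n → Bool) (u v : Fin n) (h : GrAdj A u v) :
    GrAdj A v u := ⟨h.1.symm, by rw [min_comm, max_comm]; exact h.2⟩

theorem det_final (K : ℝ) (hK : 0 < K) (ε : ℝ) (hε : 0 < ε) : ∃ n0 : ℕ,
    ∀ n ≥ n0, ∀ A : Fin n → Fin n → Bool, (∑ v, (#{w | GrAdj A v w} : ℝ) ^ 2) ≤ K * n →
    ((∃ c : Fin n → Bool, IsBisection c ∧ AlmostInternal A c ε) ∧
             (∃ c : Fin n → Bool, IsBisection c ∧ AlmostExternal A c ε)) := by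
  obtain ⟨n0, h⟩ := second_moment K hK ε hε
  refine ⟨n0, fun n hn A hA => ⟨?_, ?_⟩⟩
  · obtain ⟨c, h1, h2⟩ := h (Fin n) (by simpa using hn) 1 (Or.inl rfl) (GrAdj A) (grAdj_symm A)
      (fun v hv => hv.1 rfl) (by simpa using hA)
    refine ⟨c, bisection_of c h1, ?_⟩
    unfold AlmostInternal
    simp only [internal_iff]
    rw [Set.ncard_eq_toFinset_card', Set.toFinset_ofPred]
    simpa using h2
  · obtain ⟨c, h1, h2⟩ := h (Fin n) (by simpa using hn) (-1) (Or.inr rfl) (GrAdj A) (grAdj_symm A)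
      (fun v hv => hv.1 rfl) (by simpa using hA)
    refine ⟨c, bisection_of c h1, ?_⟩
    unfold AlmostExternal
    simp only [external_iff]
    rw [Set.ncard_eq_toFinset_card', Set.toFinset_ofPred]
    simpa using h2

theorem bern_univ (p : ℝ) (hp : p ∈ Set.Icc (0:ℝ) 1) : bernoulliM p Set.univ = 1 := by
  have h : p.toNNReal + (1 - p).toNNReal = 1 := by
    rw [← Real.toNNReal_add hp.1 (by linarith [hp.2])]; simp
  simp only [bernoulliM, Measure.coe_add, Pi.add_apply, Measure.smul_apply, measure_univ]
  rw [ENNReal.smul_def, ENNReal.smul_def, smul_eq_mul, smul_eq_mul, mul_one, mul_one]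
  exact_mod_cast h

theorem bern_true (p : ℝ) : bernoulliM p {true} = ENNReal.ofReal p := by
  simp [bernoulliM, ENNReal.ofReal]

theorem er_prob (n : ℕ) (p : ℝ) (hp : p ∈ Set.Icc (0:ℝ) 1) :
    IsProbabilityMeasure (erMeasure n p) := by
  have : IsProbabilityMeasure (bernoulliM p) := ⟨bern_univ p hp⟩
  unfold erMeasure; infer_instance

theorem er_edges (n : ℕ) (p : ℝ) (hp : p ∈ Set.Icc (0:ℝ) 1) (E : Finset (Fin n × Fin n)) :
    erMeasure n p {A | ∀ e ∈ E, A e.1 e.2 = true} = ENNReal.ofReal p ^ #E := by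
  have : IsProbabilityMeasure (bernoulliM p) := ⟨bern_univ p hp⟩
  have hset : {A : Fin n → Fin n → Bool | ∀ e ∈ E, A e.1 e.2 = true} =
      Set.pi Set.univ (fun a => Set.pi Set.univ
        (fun b => if (a, b) ∈ E then {true} else Set.univ)) := by
    ext A
    simp only [Set.mem_ofPred_eq, Set.mem_pi, Set.mem_univ, true_imp_iff]
    constructor
    · intro h a b
      split_ifs with hab
      · exact h _ hab
      · trivial
    · rintro h ⟨a, b⟩ hab
      have := h a b
      rw [if_pos hab] at this
      exact this
  rw [hset, erMeasure, Measure.pi_pi]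
  simp only [Measure.pi_pi]
  have : ∀ a b, bernoulliM p (if (a, b) ∈ E then {true} else Set.univ) =
      if (a, b) ∈ E then ENNReal.ofReal p else 1 := by
    intro a b
    split_ifs
    · exact bern_true p
    · exact bern_univ p hp
  simp only [this]
  rw [← Finset.prod_product' univ univ
    (fun a b => if (a, b) ∈ E then ENNReal.ofReal p else 1)]
  rw [Finset.prod_ite]
  simp

theorem er_pair (n : ℕ) (p : ℝ) (hp : p ∈ Set.Icc (0:ℝ) 1) (v w w' : Fin n) :
    erMeasure n p {A | GrAdj A v w ∧ GrAdj A v w'} ≤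
      ENNReal.ofReal ((if w = w' then p else 0) + p ^ 2) := by
  by_cases hw : w = v
  · have : {A : Fin n → Fin n → Bool | GrAdj A v w ∧ GrAdj A v w'} = ∅ := by
      ext A; simp [GrAdj, hw]
    rw [this]; simp
  by_cases hw' : w' = v
  · have : {A : Fin n → Fin n → Bool | GrAdj A v w ∧ GrAdj A v w'} = ∅ := by
      ext A; simp [GrAdj, hw']
    rw [this]; simp
  have hsub : {A : Fin n → Fin n → Bool | GrAdj A v w ∧ GrAdj A v w'} ⊆
      {A | ∀ e ∈ ({(min v w, max v w), (min v w', max v w')} : Finset (Fin n × Fin n)),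
        A e.1 e.2 = true} := by
    rintro A ⟨h1, h2⟩ e he
    simp only [mem_insert, mem_singleton] at he
    rcases he with rfl | rfl
    · exact h1.2
    · exact h2.2
  refine (measure_mono hsub).trans ?_
  rw [er_edges n p hp]
  by_cases h : w = w'
  · subst h
    simp only [insert_eq_of_mem, mem_singleton, card_singleton, pow_one, if_true]
    exact ENNReal.ofReal_le_ofReal (by nlinarith [sq_nonneg p])
  · rw [if_neg h, zero_add, card_pair, ENNReal.ofReal_pow hp.1]
    intro he
    rw [Prod.mk.injEq] at he
    apply h
    have e1 := he.1
    have e2 := he.2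
    rcases le_total v w with a | a <;> rcases le_total v w' with b | b <;>
      simp [a, b] at e1 e2 <;> first | exact e1 | exact e2 | (simp_all)

theorem er_moment (n : ℕ) (p C : ℝ) (hp : p ∈ Set.Icc (0:ℝ) 1) (hC : n * p ≤ C) (hn : 0 < n)
    (K : ℝ) (hK : 0 < K) :
    erMeasure n p {A | ¬ (∑ v, (#{w | GrAdj A v w} : ℝ) ^ 2) ≤ K * n} ≤
      ENNReal.ofReal ((C + C ^ 2) / K) := by
  have hn0 : (0:ℝ) < n := by exact_mod_cast hn
  have hC0 : 0 ≤ C := le_trans (mul_nonneg hn0.le hp.1) hC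
  let f : (Fin n → Fin n → Bool) → ℝ≥0∞ := fun A =>
    ∑ v, ∑ w, ∑ w', Set.indicator {A | GrAdj A v w ∧ GrAdj A v w'} 1 A
  have hmeas : ∀ S : Set (Fin n → Fin n → Bool), MeasurableSet S := fun S =>
    (Set.toFinite S).measurableSet
  have hf : ∀ A, f A = ENNReal.ofReal (∑ v, (#{w | GrAdj A v w} : ℝ) ^ 2) := by
    intro A
    rw [ENNReal.ofReal_sum_of_nonneg (fun _ _ => by positivity)]
    refine sum_congr rfl fun v _ => ?_
    rw [ENNReal.ofReal_pow (by positivity), ENNReal.ofReal_natCast, ← Finset.sum_boole, sq,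
      sum_mul_sum]
    refine sum_congr rfl fun w _ => sum_congr rfl fun w' _ => ?_
    by_cases h1 : GrAdj A v w <;> by_cases h2 : GrAdj A v w' <;> simp [h1, h2]
  have hint : ∫⁻ A, f A ∂(erMeasure n p) ≤ ENNReal.ofReal (n * (C + C ^ 2)) := by
    simp only [f]
    have e : ∫⁻ A, (∑ v, ∑ w, ∑ w', Set.indicator {A | GrAdj A v w ∧ GrAdj A v w'} 1 A)
        ∂(erMeasure n p) = ∑ v, ∑ w, ∑ w', erMeasure n p {A | GrAdj A v w ∧ GrAdj A v w'} := by
      have hm1 : ∀ g : (Fin n → Fin n → Bool) → ℝ≥0∞, Measurable g :=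
        fun g S _ => hmeas _
      rw [lintegral_finsetSum _ (fun _ _ => hm1 _)]
      refine sum_congr rfl fun v _ => ?_
      rw [lintegral_finsetSum _ (fun _ _ => hm1 _)]
      refine sum_congr rfl fun w _ => ?_
      rw [lintegral_finsetSum _ (fun _ _ => hm1 _)]
      refine sum_congr rfl fun w' _ => ?_
      rw [lintegral_indicator_one (hmeas _)]
    rw [e]
    refine (sum_le_sum fun v _ => sum_le_sum fun w _ => sum_le_sum fun w' _ =>
      er_pair n p hp v w w').trans ?_
    have hnn : ∀ w w' : Fin n, 0 ≤ (if w = w' then p else 0) + p ^ 2 := by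
      intro w w'
      have := hp.1
      split_ifs <;> positivity
    have e2 : ∑ v : Fin n, ∑ w : Fin n, ∑ w' : Fin n,
        ENNReal.ofReal ((if w = w' then p else 0) + p ^ 2) =
        ENNReal.ofReal (∑ v : Fin n, ∑ w : Fin n, ∑ w' : Fin n,
          ((if w = w' then p else 0) + p ^ 2)) := by
      rw [ENNReal.ofReal_sum_of_nonneg fun _ _ => sum_nonneg fun _ _ => sum_nonneg fun _ _ =>
        hnn _ _]
      refine sum_congr rfl fun v _ => ?_
      rw [ENNReal.ofReal_sum_of_nonneg fun _ _ => sum_nonneg fun _ _ => hnn _ _]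
      refine sum_congr rfl fun w _ => ?_
      rw [ENNReal.ofReal_sum_of_nonneg fun _ _ => hnn _ _]
    rw [e2]
    apply ENNReal.ofReal_le_ofReal
    have e3 : ∑ v : Fin n, ∑ w : Fin n, ∑ w' : Fin n, ((if w = w' then p else 0) + p ^ 2) =
        n * (n * p + (n * p) ^ 2) := by
      simp [sum_add_distrib]; ring
    rw [e3]
    have : 0 ≤ n * p := mul_nonneg hn0.le hp.1
    gcongr
  have hmk := mul_meas_ge_le_lintegral (μ := erMeasure n p) (f := f) (fun S _ => hmeas _)
    (ENNReal.ofReal (K * n))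
  have hsub : {A | ¬ (∑ v, (#{w | GrAdj A v w} : ℝ) ^ 2) ≤ K * n} ⊆
      {A | ENNReal.ofReal (K * n) ≤ f A} := by
    intro A hA
    simp only [Set.mem_ofPred_eq, not_le] at hA ⊢
    rw [hf]
    exact ENNReal.ofReal_le_ofReal hA.le
  refine (measure_mono hsub).trans ?_
  have hkn : 0 < K * n := by positivity
  have h1 := hmk.trans hint
  have e4 : (n * (C + C ^ 2) : ℝ) = (K * n) * ((C + C ^ 2) / K) := by field_simp
  rw [e4, ENNReal.ofReal_mul hkn.le] at h1
  exact (ENNReal.mul_le_mul_iff_right (by simpa using hkn) ENNReal.ofReal_ne_top).1 h1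

end final

/-- If `limsup n·pₙ < ∞` (i.e. `n·pₙ` is eventually bounded), then whp `𝔾(n,pₙ)` has an
`ε`-almost-internal bisection and an `ε`-almost-external bisection. -/
theorem whp_almost_internal_external_bisections
    (p : ℕ → ℝ) (hp : ∀ n, p n ∈ Set.Icc (0 : ℝ) 1)
    (hbdd : ∃ C : ℝ, ∀ᶠ n : ℕ in atTop, (n : ℝ) * p n ≤ C)
    (ε : ℝ) (hε : 0 < ε) :
    Tendsto (fun n => erMeasure n (p n)
        {A | (∃ c : Fin n → Bool, IsBisection c ∧ AlmostInternal A c ε) ∧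
             (∃ c : Fin n → Bool, IsBisection c ∧ AlmostExternal A c ε)})
      atTop (nhds 1) := by
  obtain ⟨C, hC⟩ := hbdd
  have hC0 : 0 ≤ C := by
    obtain ⟨n, hn⟩ := hC.exists
    exact le_trans (mul_nonneg (Nat.cast_nonneg n) (hp n).1) hn
  set S : ∀ n, Set (Fin n → Fin n → Bool) := fun n =>
    {A | (∃ c : Fin n → Bool, IsBisection c ∧ AlmostInternal A c ε) ∧
             (∃ c : Fin n → Bool, IsBisection c ∧ AlmostExternal A c ε)} with hS
  have hmeas : ∀ n, MeasurableSet (S n) := fun n => (Set.toFinite (S n)).measurableSet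
  have hcompl : Tendsto (fun n => erMeasure n (p n) (S n)ᶜ) atTop (nhds 0) := by
    rw [ENNReal.tendsto_nhds_zero]
    intro δ hδ
    obtain ⟨r, hr0, hr⟩ : ∃ r : ℝ, 0 < r ∧ ENNReal.ofReal r ≤ δ := by
      by_cases h : δ = ⊤
      · exact ⟨1, one_pos, by simp [h]⟩
      · exact ⟨δ.toReal, ENNReal.toReal_pos hδ.ne' h, ENNReal.ofReal_toReal_le⟩
    have hKpos : 0 < (C + C ^ 2 + 1) / r := by positivity
    obtain ⟨n0, hn0⟩ := det_final ((C + C ^ 2 + 1) / r) hKpos ε hε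
    filter_upwards [hC, eventually_ge_atTop n0, eventually_gt_atTop 0] with n h1 h2 h3
    refine le_trans (measure_mono ?_)
      ((er_moment n (p n) C (hp n) h1 h3 ((C + C ^ 2 + 1) / r) hKpos).trans (le_trans ?_ hr))
    · intro A hA hle
      exact hA (hn0 n h2 A hle)
    · apply ENNReal.ofReal_le_ofReal
      rw [div_le_iff₀ hKpos]
      have : r * ((C + C ^ 2 + 1) / r) = C + C ^ 2 + 1 := by field_simp
      linarith
  have heq : ∀ n, erMeasure n (p n) (S n) = 1 - erMeasure n (p n) (S n)ᶜ := by
    intro n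
    have := er_prob n (p n) (hp n)
    rw [prob_compl_eq_one_sub (hmeas n)]
    exact (ENNReal.sub_sub_cancel ENNReal.one_ne_top prob_le_one).symm
  refine (tendsto_congr heq).2 ?_
  have := ENNReal.Tendsto.sub (tendsto_const_nhds (x := (1 : ENNReal)) (f := atTop (α := ℕ)))
    hcompl (Or.inl ENNReal.one_ne_top)
  simpa using this
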